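/- arXiv:2506.07071 — 2 statements merged into one kernel-verified Lean document; each statement's English description precedes it below -/
import Mathlib

section
/- Let (E,𝒞,r) be a semimatroid and define r̂ : 2^E → ℕ by r̂(X) = max{r(Y) : Y ⊆ X, Y ∈ 𝒞}. Then for every subset X ⊆ E: X ∈ 𝒞 if and only if every circuit K of M_𝒞 (that is, every minimal subset K ⊆ E with r̂(K) < |K|) with K ⊆ X belongs to 𝒞. Moreover, the circuits of the semimatroid 𝒞 are exactly the circuits K of M_𝒞 with K ∈ 𝒞, and r̂(X) = r(X) for every X ∈ 𝒞. -/
/-- A semimatroid on a finite ground set `E`: a nonempty, subset-closed collection `C`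
of "central" subsets of `E`, together with a rank function `r` satisfying (SR1)-(SR5). -/
structure Semimatroid (E : Type*) [DecidableEq E] [Fintype E] where
  C : Finset (Finset E)
  r : Finset E → ℕ
  C_nonempty : C.Nonempty
  mem_of_subset : ∀ ⦃X Y : Finset E⦄, X ∈ C → Y ⊆ X → Y ∈ C
  r_le_card : ∀ ⦃X : Finset E⦄, X ∈ C → r X ≤ X.card
  r_mono : ∀ ⦃X Y : Finset E⦄, X ∈ C → Y ∈ C → X ⊆ Y → r X ≤ r Y
  submodular : ∀ ⦃X Y : Finset E⦄, X ∈ C → Y ∈ C → X ∪ Y ∈ C →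
    r (X ∩ Y) + r (X ∪ Y) ≤ r X + r Y
  union_mem : ∀ ⦃X Y : Finset E⦄, X ∈ C → Y ∈ C → r X = r (X ∩ Y) → X ∪ Y ∈ C
  augment : ∀ ⦃X Y : Finset E⦄, X ∈ C → Y ∈ C → r X < r Y →
    ∃ e ∈ Y \ X, insert e X ∈ C

namespace Semimatroid

variable {E : Type*} [DecidableEq E] [Fintype E] (S : Semimatroid E)

/-- The rank `r(𝒞)` of the semimatroid: the common rank of the maximal central sets. -/
def rank : ℕ := S.C.sup S.r

/-- The closure of a central set `X`:
`cl X = {e ∈ E : X ∪ {e} ∈ 𝒞 and r (X ∪ {e}) = r X}`. -/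
def cl (X : Finset E) : Finset E :=
  Finset.univ.filter fun e => insert e X ∈ S.C ∧ S.r (insert e X) = S.r X

/-- The flats of the semimatroid: central sets `X` with `cl X = X`. -/
def flats : Finset (Finset E) := S.C.filter fun X => S.cl X = X

/-- The characteristic polynomial `χ(𝒞;t) = Σ_{X ∈ 𝒞} (−1)^{|X|} t^{r(𝒞)−r(X)}`. -/
noncomputable def charPoly : Polynomial ℤ :=
  ∑ A ∈ S.C, (-1 : Polynomial ℤ) ^ A.card * Polynomial.X ^ (S.rank - S.r A)

end Semimatroid

namespace Semimatroid

variable {E : Type*} [DecidableEq E] [Fintype E] (S : Semimatroid E)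

/-- A circuit of the semimatroid: a minimal dependent central set. -/
def IsCircuit (K : Finset E) : Prop :=
  K ∈ S.C ∧ S.r K < K.card ∧ ∀ Y ⊂ K, S.r Y = Y.card

/-- The extension `r̂(X) = max{r(Y) : Y ⊆ X, Y ∈ 𝒞}` of the rank function to all of `2^E`;
it is the rank function of the matroid `M_𝒞`. -/
def rhat (X : Finset E) : ℕ := (S.C.filter fun Y => Y ⊆ X).sup S.r

/-- A circuit of the matroid `M_𝒞`: a minimal subset `K ⊆ E` with `r̂(K) < |K|`. -/
def IsMatCircuit (K : Finset E) : Prop :=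
  S.rhat K < K.card ∧ ∀ K' ⊂ K, ¬ (S.rhat K' < K'.card)

end Semimatroid

/-!
Let `N` be a minimal noncentral set. It is dependent for `r̂`, since `r̂ N` is attained on a central,
hence proper, subset of `N`. Every proper subset of `N` is independent: otherwise it contains a
circuit `K` of `𝒞`; for `f ∈ K` the sets `K` and `N \ {f}` are central and `K` has the same rank as
`K \ {f} = K ∩ (N \ {f})`, so (SR4) makes `N = K ∪ (N \ {f})` central. Hence `N` is a circuit of
`M_𝒞`, and every noncentral set contains a noncentral circuit of `M_𝒞`.
-/

namespace Semimatroid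

section Rhat

variable {E : Type*} [DecidableEq E] [Fintype E] (S : Semimatroid E)

theorem empty_mem : ∅ ∈ S.C :=
  let ⟨_, hX⟩ := S.C_nonempty
  S.mem_of_subset hX (Finset.empty_subset _)

theorem rhat_eq_r {X : Finset E} (hX : X ∈ S.C) : S.rhat X = S.r X := by
  refine le_antisymm (Finset.sup_le fun Y hY ↦ ?_) (Finset.le_sup (f := S.r) (by simp [hX]))
  obtain ⟨hYC, hYX⟩ := Finset.mem_filter.mp hY
  exact S.r_mono hYC hX hYX

theorem exists_mem_subset_rhat_eq (X : Finset E) : ∃ Y ∈ S.C, Y ⊆ X ∧ S.rhat X = S.r Y := by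
  obtain ⟨Y, hY, hrY⟩ := Finset.exists_mem_eq_sup (S.C.filter fun Y ↦ Y ⊆ X)
    ⟨∅, by simp [S.empty_mem]⟩ S.r
  obtain ⟨hYC, hYX⟩ := Finset.mem_filter.mp hY
  exact ⟨Y, hYC, hYX, hrY⟩

theorem mem_of_card_le_rhat {X : Finset E} (hX : X.card ≤ S.rhat X) : X ∈ S.C := by
  obtain ⟨Y, hYC, hYX, hrY⟩ := S.exists_mem_subset_rhat_eq X
  have hcard : X.card ≤ Y.card := (hX.trans_eq hrY).trans (S.r_le_card hYC)
  exact Finset.eq_of_subset_of_card_le hYX hcard ▸ hYC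

theorem not_r_lt_card_iff {X : Finset E} (hX : X ∈ S.C) :
    ¬ S.r X < X.card ↔ S.r X = X.card :=
  not_lt.trans (S.r_le_card hX).ge_iff_eq

end Rhat

section Circuit

variable {E : Type*} [DecidableEq E] [Fintype E] {S : Semimatroid E}

theorem exists_isCircuit_subset {X : Finset E} (hX : X ∈ S.C) (hdep : S.r X < X.card) :
    ∃ K ⊆ X, S.IsCircuit K := by
  obtain ⟨K, hKX, hK⟩ :=
    exists_minimal_le_of_wellFoundedLT (fun Y : Finset E ↦ S.r Y < Y.card) X hdep
  have hKC : K ∈ S.C := S.mem_of_subset hX hKX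
  exact ⟨K, hKX, hKC, hK.prop, fun Y hY ↦
    (S.not_r_lt_card_iff (S.mem_of_subset hKC hY.subset)).mp (hK.not_prop_of_lt hY)⟩

theorem isCircuit_iff_isMatCircuit_and_mem {K : Finset E} :
    S.IsCircuit K ↔ S.IsMatCircuit K ∧ K ∈ S.C := by
  rw [IsCircuit, IsMatCircuit, and_comm]
  refine and_congr_left fun hK ↦ and_congr (by rw [S.rhat_eq_r hK]) ?_
  refine forall₂_congr fun Y hYK ↦ ?_
  have hY : Y ∈ S.C := S.mem_of_subset hK hYK.subset
  rw [S.rhat_eq_r hY, S.not_r_lt_card_iff hY]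

theorem IsCircuit.nonempty {K : Finset E} (hK : S.IsCircuit K) : K.Nonempty :=
  Finset.card_pos.mp (Nat.zero_lt_of_lt hK.2.1)

theorem IsCircuit.r_le_r_erase {K : Finset E} (hK : S.IsCircuit K) {f : E} (hf : f ∈ K) :
    S.r K ≤ S.r (K.erase f) := by
  rw [hK.2.2 _ (Finset.erase_ssubset hf), Finset.card_erase_of_mem hf]
  exact Nat.le_sub_one_of_lt hK.2.1

theorem IsCircuit.union_mem {K X : Finset E} (hK : S.IsCircuit K) (hX : X ∈ S.C) {f : E}
    (hf : f ∈ K) (hKX : K.erase f ⊆ X) : K ∪ X ∈ S.C := by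
  have hinter : K ∩ X ∈ S.C := S.mem_of_subset hX Finset.inter_subset_right
  have herase : K.erase f ⊆ K ∩ X := Finset.subset_inter (K.erase_subset f) hKX
  refine S.union_mem hK.1 hX (le_antisymm ?_ (S.r_mono hinter hK.1 Finset.inter_subset_left))
  exact (hK.r_le_r_erase hf).trans (S.r_mono (S.mem_of_subset hinter herase) hinter herase)

theorem isMatCircuit_of_minimal_notMem {N : Finset E} (hN : Minimal (· ∉ S.C) N) :
    S.IsMatCircuit N := by
  have mem_of_ssubset {Y : Finset E} (hY : Y ⊂ N) : Y ∈ S.C := not_not.mp (hN.not_prop_of_lt hY)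
  refine ⟨not_le.mp fun hcard ↦ hN.prop (S.mem_of_card_le_rhat hcard), fun Y hYN hdep ↦ ?_⟩
  have hY : Y ∈ S.C := mem_of_ssubset hYN
  obtain ⟨K, hKY, hK⟩ := exists_isCircuit_subset hY (S.rhat_eq_r hY ▸ hdep)
  obtain ⟨f, hf⟩ := hK.nonempty
  have hKN : K ⊆ N := hKY.trans hYN.subset
  have herase : N.erase f ∈ S.C := mem_of_ssubset (Finset.erase_ssubset (hKN hf))
  have hunion : K ∪ N.erase f ∈ S.C := hK.union_mem herase hf (Finset.erase_subset_erase f hKN)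
  have hsubset : N ⊆ K ∪ N.erase f := by grind
  exact hN.prop (S.mem_of_subset hunion hsubset)

theorem mem_iff_forall_isMatCircuit_mem {X : Finset E} :
    X ∈ S.C ↔ ∀ K, S.IsMatCircuit K → K ⊆ X → K ∈ S.C := by
  refine ⟨fun hX K _ hKX ↦ S.mem_of_subset hX hKX, fun hcircuits ↦ ?_⟩
  by_contra hX
  obtain ⟨N, hNX, hN⟩ := exists_minimal_le_of_wellFoundedLT (· ∉ S.C) X hX
  exact hN.prop (hcircuits N (isMatCircuit_of_minimal_notMem hN) hNX)

end Circuit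

end Semimatroid

/-- For a semimatroid `(E,𝒞,r)`: a subset `X ⊆ E` is central iff every
circuit of `M_𝒞` contained in `X` is central; the circuits of `𝒞` are exactly the circuits
of `M_𝒞` that are central; and `r̂` agrees with `r` on central sets. -/
theorem Semimatroid.central_iff_circuits_central
    {E : Type*} [DecidableEq E] [Fintype E] (S : Semimatroid E) :
    (∀ X : Finset E,
      (X ∈ S.C ↔ ∀ K : Finset E, S.IsMatCircuit K → K ⊆ X → K ∈ S.C)) ∧
    (∀ K : Finset E, S.IsCircuit K ↔ (S.IsMatCircuit K ∧ K ∈ S.C)) ∧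
    (∀ X ∈ S.C, S.rhat X = S.r X) :=
  ⟨fun _ ↦ mem_iff_forall_isMatCircuit_mem, fun _ ↦ isCircuit_iff_isMatCircuit_and_mem,
    fun _ hX ↦ S.rhat_eq_r hX⟩
end

section
/- (Convolution formula for the characteristic polynomial of semimatroids.) Let (E,𝒞,r) be a semimatroid without loops. Then, as an identity of polynomials in the two variables t and s, χ(𝒞; t·s) = Σ_{X ∈ ℒ(𝒞)} t^{r(𝒞)−r(X)} · χ(𝒞|X; t) · χ(𝒞/X; s), where χ(𝒞; t·s) denotes the characteristic polynomial of 𝒞 with the product t·s substituted for its variable. -/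
namespace Semimatroid

variable {E : Type*} [DecidableEq E] [Fintype E] (S : Semimatroid E)

/-- The central sets of the restriction `𝒞|X`: `{Y ⊆ X : Y ∈ 𝒞}`. -/
def restCentrals (X : Finset E) : Finset (Finset E) := S.C.filter fun Y => Y ⊆ X

/-- The rank of the restriction `𝒞|X` (the common rank of its maximal central sets). -/
def restRank (X : Finset E) : ℕ := (S.restCentrals X).sup S.r

/-- The characteristic polynomial of the restriction `𝒞|X`, evaluated at `t`. -/
def restCharEval (X : Finset E) (t : ℤ) : ℤ :=
  ∑ Y ∈ S.restCentrals X, (-1 : ℤ) ^ Y.card * t ^ (S.restRank X - S.r Y)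

/-- The central sets of the contraction `𝒞/X`: `{Y ⊆ E \ X : Y ∪ X ∈ 𝒞}`. -/
def contrCentrals (X : Finset E) : Finset (Finset E) :=
  (Finset.univ \ X).powerset.filter fun Y => Y ∪ X ∈ S.C

/-- The rank of the contraction `𝒞/X`, whose rank function is `Y ↦ r(Y ∪ X) − r(X)`. -/
def contrRank (X : Finset E) : ℕ :=
  (S.contrCentrals X).sup fun Y => S.r (Y ∪ X) - S.r X

/-- The characteristic polynomial of the contraction `𝒞/X`, evaluated at `s`. -/
def contrCharEval (X : Finset E) (s : ℤ) : ℤ :=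
  ∑ Y ∈ S.contrCentrals X,
    (-1 : ℤ) ^ Y.card * s ^ (S.contrRank X - (S.r (Y ∪ X) - S.r X))

/-- The characteristic polynomial of `𝒞` evaluated at `t`:
`χ(𝒞;t) = Σ_{A ∈ 𝒞} (−1)^{|A|} t^{r(𝒞)−r(A)}`. -/
def charEval (t : ℤ) : ℤ :=
  ∑ A ∈ S.C, (-1 : ℤ) ^ A.card * t ^ (S.rank - S.r A)

end Semimatroid

/-!
For `X ∈ 𝒞`, the product `t ^ (r(𝒞) - r(X)) χ(𝒞|X; t)` is the sum over the subsets `Y` of `X` of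
`(-1) ^ |Y| t ^ (r(𝒞) - r(Y))`, while `χ(𝒞/X; s)` is the sum over the central `Z ⊇ X` of
`(-1) ^ |Z \ X| s ^ (r(𝒞) - r(Z))`. The coefficients `(-1) ^ |Z \ X|` are the Möbius function of the
Boolean lattice, so summing the product of the two over all central sets `X` leaves only the terms
with `Y = Z`, and these add up to `χ(𝒞; ts)`. The central sets `X` that are not flats contribute
nothing, because then `𝒞/X` has a loop and `χ(𝒞/X; s) = 0`.
-/

section FinsetSums

open Finset

variable {α M : Type*} [DecidableEq α] [AddCommGroup M]

theorem sum_Icc_neg_one_pow_card_sdiff (Y Z : Finset α) :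
    ∑ X ∈ Icc Y Z, (-1 : ℤ) ^ #(Z \ X) = if Y = Z then 1 else 0 := by
  by_cases hYZ : Y ⊆ Z
  · calc
      ∑ X ∈ Icc Y Z, (-1 : ℤ) ^ #(Z \ X) = ∑ W ∈ (Z \ Y).powerset, (-1 : ℤ) ^ #W := by
        refine sum_nbij' (Z \ ·) (Z \ ·) ?_ ?_ ?_ ?_ fun _ _ ↦ rfl
        all_goals grind
      _ = if Y = Z then 1 else 0 := by
        rw [sum_powerset_neg_one_pow_card]
        exact if_congr (sdiff_eq_empty_iff_subset.trans ⟨hYZ.antisymm, fun h ↦ h.ge⟩) rfl rfl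
  · rw [Icc_eq_empty hYZ, sum_empty, if_neg fun h ↦ hYZ h.le]

theorem sum_powerset_neg_one_pow_card_sdiff_zsmul_sum_powerset (f : Finset α → M) (Z : Finset α) :
    ∑ X ∈ Z.powerset, (-1 : ℤ) ^ #(Z \ X) • ∑ Y ∈ X.powerset, f Y = f Z := by
  calc
    ∑ X ∈ Z.powerset, (-1 : ℤ) ^ #(Z \ X) • ∑ Y ∈ X.powerset, f Y
      = ∑ Y ∈ Z.powerset, ∑ X ∈ Icc Y Z, (-1 : ℤ) ^ #(Z \ X) • f Y := by
        simp only [smul_sum]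
        exact sum_comm' fun X Y ↦ by grind
    _ = ∑ Y ∈ Z.powerset, if Y = Z then f Y else 0 := by
        simp only [← sum_smul, sum_Icc_neg_one_pow_card_sdiff, ite_smul, one_smul, zero_smul]
    _ = f Z := by simp

theorem sum_eq_zero_of_insert_eq_neg {𝒜 : Finset (Finset α)} {a : α} {f : Finset α → M}
    (h𝒜 : ∀ A, a ∉ A → (insert a A ∈ 𝒜 ↔ A ∈ 𝒜))
    (hf : ∀ A ∈ 𝒜, a ∉ A → f (insert a A) = -f A) : ∑ A ∈ 𝒜, f A = 0 := by
  have hmem : ∑ A ∈ 𝒜 with a ∈ A, f A = ∑ A ∈ 𝒜 with a ∉ A, -f A := by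
    symm
    refine sum_nbij' (insert a) (erase · a) ?_ ?_ ?_ ?_ ?_
    all_goals grind [insert_erase]
  rw [← sum_filter_add_sum_filter_not 𝒜 (a ∈ ·), hmem, sum_neg_distrib, neg_add_cancel]

end FinsetSums

namespace Semimatroid

open Finset Polynomial

variable {E R : Type*} [DecidableEq E] [Fintype E] [CommRing R] (S : Semimatroid E)
  {X Y Z : Finset E} {e : E}

/-- The characteristic polynomial of the restriction `𝒞|X`, kept as an element of `ℤ[X]` so that
it can be evaluated in every commutative ring. -/
noncomputable def restCharPoly (X : Finset E) : ℤ[X] :=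
  ∑ Y ∈ S.restCentrals X, (-1) ^ #Y * Polynomial.X ^ (S.restRank X - S.r Y)

/-- The characteristic polynomial of the contraction `𝒞/X`, kept as an element of `ℤ[X]` so that
it can be evaluated in every commutative ring. -/
noncomputable def contrCharPoly (X : Finset E) : ℤ[X] :=
  ∑ Y ∈ S.contrCentrals X, (-1) ^ #Y * Polynomial.X ^ (S.contrRank X - (S.r (Y ∪ X) - S.r X))

theorem aeval_charPoly (t : R) :
    aeval t S.charPoly = ∑ A ∈ S.C, (-1) ^ #A * t ^ (S.rank - S.r A) := by
  simp [charPoly]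

theorem aeval_restCharPoly (X : Finset E) (t : R) :
    aeval t (S.restCharPoly X) =
      ∑ Y ∈ S.restCentrals X, (-1) ^ #Y * t ^ (S.restRank X - S.r Y) := by
  simp [restCharPoly]

theorem aeval_contrCharPoly (X : Finset E) (s : R) :
    aeval s (S.contrCharPoly X) =
      ∑ Y ∈ S.contrCentrals X, (-1) ^ #Y * s ^ (S.contrRank X - (S.r (Y ∪ X) - S.r X)) := by
  simp [contrCharPoly]

variable {S}

theorem mem_cl : e ∈ S.cl X ↔ insert e X ∈ S.C ∧ S.r (insert e X) = S.r X := by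
  simp [cl]

theorem mem_restCentrals : Y ∈ S.restCentrals X ↔ Y ∈ S.C ∧ Y ⊆ X :=
  mem_filter

theorem mem_contrCentrals : Y ∈ S.contrCentrals X ↔ Disjoint Y X ∧ Y ∪ X ∈ S.C := by
  simp [contrCentrals, subset_sdiff]

theorem r_le_rank (hX : X ∈ S.C) : S.r X ≤ S.rank :=
  le_sup hX

theorem restCentrals_eq_powerset (hX : X ∈ S.C) : S.restCentrals X = X.powerset := by
  ext Y
  rw [mem_restCentrals, mem_powerset, and_iff_right_of_imp (S.mem_of_subset hX)]

theorem restRank_eq (hX : X ∈ S.C) : S.restRank X = S.r X :=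
  le_antisymm
    (Finset.sup_le fun _ hY ↦
      S.r_mono (mem_restCentrals.1 hY).1 hX (mem_restCentrals.1 hY).2)
    (le_sup (mem_restCentrals.2 ⟨hX, Subset.rfl⟩))

theorem exists_superset_r_eq_rank (hX : X ∈ S.C) : ∃ Z ∈ S.C, X ⊆ Z ∧ S.r Z = S.rank := by
  obtain ⟨Z, hXZ, hZ⟩ := S.C.exists_le_maximal hX
  obtain ⟨Y, hY, hYrank⟩ := exists_mem_eq_sup S.C S.C_nonempty S.r
  refine ⟨Z, hZ.prop, hXZ, (r_le_rank hZ.prop).antisymm ?_⟩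
  by_contra! hlt
  obtain ⟨e, he, heZ⟩ := S.augment hZ.prop hY (hlt.trans_eq hYrank)
  exact (mem_sdiff.1 he).2 (hZ.le_of_ge heZ (subset_insert e Z) (mem_insert_self e Z))

theorem contrRank_eq (hX : X ∈ S.C) : S.contrRank X = S.rank - S.r X := by
  refine le_antisymm (Finset.sup_le fun Y hY ↦ ?_) ?_
  · exact Nat.sub_le_sub_right (r_le_rank (mem_contrCentrals.1 hY).2) _
  · obtain ⟨Z, hZ, hXZ, hZrank⟩ := exists_superset_r_eq_rank hX
    have hZX : Z \ X ∪ X = Z := sdiff_union_of_subset hXZ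
    have hmem : Z \ X ∈ S.contrCentrals X :=
      mem_contrCentrals.2 ⟨sdiff_disjoint, hZX.symm ▸ hZ⟩
    calc
      S.rank - S.r X = S.r (Z \ X ∪ X) - S.r X := by rw [hZX, hZrank]
      _ ≤ S.contrRank X := le_sup (f := fun Y ↦ S.r (Y ∪ X) - S.r X) hmem

theorem pow_mul_aeval_restCharPoly (hX : X ∈ S.C) (t : R) :
    t ^ (S.rank - S.r X) * aeval t (S.restCharPoly X) =
      ∑ Y ∈ X.powerset, (-1) ^ #Y * t ^ (S.rank - S.r Y) := by
  rw [aeval_restCharPoly, restCentrals_eq_powerset hX, restRank_eq hX, mul_sum]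
  refine sum_congr rfl fun Y hY ↦ ?_
  have hYX : S.r Y ≤ S.r X :=
    S.r_mono (S.mem_of_subset hX (mem_powerset.1 hY)) hX (mem_powerset.1 hY)
  rw [mul_left_comm, ← pow_add, tsub_add_tsub_cancel (r_le_rank hX) hYX]

theorem aeval_contrCharPoly_eq_sum_superset (hX : X ∈ S.C) (s : R) :
    aeval s (S.contrCharPoly X) =
      ∑ Z ∈ S.C with X ⊆ Z, (-1) ^ #(Z \ X) * s ^ (S.rank - S.r Z) := by
  rw [aeval_contrCharPoly, contrRank_eq hX]
  symm
  refine sum_nbij' (· \ X) (· ∪ X) ?_ ?_ ?_ ?_ ?_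
  · intro Z hZ
    obtain ⟨hZ, hXZ⟩ := mem_filter.1 hZ
    exact mem_contrCentrals.2 ⟨sdiff_disjoint, (sdiff_union_of_subset hXZ).symm ▸ hZ⟩
  · exact fun Y hY ↦ mem_filter.2 ⟨(mem_contrCentrals.1 hY).2, subset_union_right⟩
  · exact fun Z hZ ↦ sdiff_union_of_subset (mem_filter.1 hZ).2
  · exact fun Y hY ↦ union_sdiff_cancel_right (mem_contrCentrals.1 hY).1
  · intro Z hZ
    obtain ⟨hZ, hXZ⟩ := mem_filter.1 hZ
    rw [sdiff_union_of_subset hXZ, tsub_tsub_tsub_cancel_right (S.r_mono hX hZ hXZ)]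

theorem subset_cl (hX : X ∈ S.C) : X ⊆ S.cl X := fun e he ↦ by
  rw [mem_cl, insert_eq_of_mem he]
  exact ⟨hX, rfl⟩

theorem cl_subset_cl (hZ : Z ∈ S.C) (hXZ : X ⊆ Z) : S.cl X ⊆ S.cl Z := by
  intro e he
  obtain ⟨heX, hr⟩ := mem_cl.1 he
  by_cases heZ : e ∈ Z
  · exact subset_cl hZ heZ
  have hinter : insert e X ∩ Z = X := by
    rw [insert_inter_of_notMem heZ, inter_eq_left.2 hXZ]
  have hunion : insert e X ∪ Z = insert e Z := by
    rw [insert_union, union_eq_right.2 hXZ]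
  have hcentral : insert e X ∪ Z ∈ S.C := S.union_mem heX hZ (by rw [hinter, hr])
  have hsub := S.submodular heX hZ hcentral
  rw [hunion] at hcentral
  rw [hinter, hunion, hr] at hsub
  exact mem_cl.2 ⟨hcentral, (Nat.le_of_add_le_add_left hsub).antisymm
    (S.r_mono hZ hcentral (subset_insert e Z))⟩

theorem contrCharPoly_eq_zero_of_mem_cl (he : e ∈ S.cl X) (heX : e ∉ X) :
    S.contrCharPoly X = 0 := by
  have hloop {Y : Finset E} (hY : Y ∈ S.contrCentrals X) :
      insert e Y ∪ X ∈ S.C ∧ S.r (insert e Y ∪ X) = S.r (Y ∪ X) := by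
    rw [insert_union, ← mem_cl]
    exact cl_subset_cl (mem_contrCentrals.1 hY).2 subset_union_right he
  refine sum_eq_zero_of_insert_eq_neg (a := e) (fun Y _ ↦ ⟨fun hY ↦ ?_, fun hY ↦ ?_⟩)
    fun Y hY heY ↦ ?_
  · obtain ⟨hdisj, hcentral⟩ := mem_contrCentrals.1 hY
    exact mem_contrCentrals.2 ⟨hdisj.mono_left (subset_insert e Y),
      S.mem_of_subset hcentral (union_subset_union_left (subset_insert e Y))⟩
  · exact mem_contrCentrals.2
      ⟨disjoint_insert_left.2 ⟨heX, (mem_contrCentrals.1 hY).1⟩, (hloop hY).1⟩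
  · rw [(hloop hY).2, card_insert_of_notMem heY, pow_succ, mul_neg_one, neg_mul]

theorem contrCharPoly_eq_zero_of_notMem_flats (hX : X ∈ S.C) (hflat : X ∉ S.flats) :
    S.contrCharPoly X = 0 := by
  have hcl : ¬ S.cl X ⊆ X := fun h ↦
    hflat (mem_filter.2 ⟨hX, h.antisymm (subset_cl hX)⟩)
  obtain ⟨e, he, heX⟩ := not_subset.1 hcl
  exact contrCharPoly_eq_zero_of_mem_cl he heX

theorem charPoly_convolution_general (S : Semimatroid E) (t s : R) :
    aeval (t * s) S.charPoly =
      ∑ X ∈ S.flats,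
        t ^ (S.rank - S.r X) * aeval t (S.restCharPoly X) * aeval s (S.contrCharPoly X) := by
  let f (Y : Finset E) : R := (-1) ^ #Y * t ^ (S.rank - S.r Y)
  let g (Z : Finset E) : R := s ^ (S.rank - S.r Z)
  calc
    aeval (t * s) S.charPoly = ∑ Z ∈ S.C, f Z * g Z := by
      simp only [aeval_charPoly, mul_pow, mul_assoc, f, g]
    _ = ∑ Z ∈ S.C, ∑ X ∈ Z.powerset, (∑ Y ∈ X.powerset, f Y) * ((-1) ^ #(Z \ X) * g Z) := by
      refine sum_congr rfl fun Z _ ↦ ?_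
      rw [← sum_powerset_neg_one_pow_card_sdiff_zsmul_sum_powerset f Z, sum_mul]
      refine sum_congr rfl fun X _ ↦ ?_
      push_cast [zsmul_eq_mul]
      ring
    _ = ∑ X ∈ S.C, (∑ Y ∈ X.powerset, f Y) * ∑ Z ∈ S.C with X ⊆ Z, (-1) ^ #(Z \ X) * g Z := by
      simp only [mul_sum]
      exact sum_comm' fun Z X ↦ by grind [S.mem_of_subset]
    _ = ∑ X ∈ S.C,
        t ^ (S.rank - S.r X) * aeval t (S.restCharPoly X) * aeval s (S.contrCharPoly X) :=
      sum_congr rfl fun X hX ↦ by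
        rw [pow_mul_aeval_restCharPoly hX, aeval_contrCharPoly_eq_sum_superset hX]
    _ = _ := by
      refine (sum_subset (filter_subset _ _) fun X hX hflat ↦ ?_).symm
      rw [contrCharPoly_eq_zero_of_notMem_flats hX hflat, map_zero, mul_zero]

end Semimatroid

/-- **convolution formula for the characteristic polynomial.** For a
loopless semimatroid `𝒞`, as an identity in the two variables `t` and `s`,
`χ(𝒞; t·s) = Σ_{X ∈ ℒ(𝒞)} t^{r(𝒞)−r(X)} χ(𝒞|X; t) χ(𝒞/X; s)`. -/
theorem Semimatroid.charPoly_convolution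
    {E : Type*} [DecidableEq E] [Fintype E] (S : Semimatroid E)
    (hloopless : ¬ ∃ e : E, {e} ∈ S.C ∧ S.r {e} = 0) :
    ∀ t s : ℤ,
      S.charEval (t * s) =
        ∑ X ∈ S.flats,
          t ^ (S.rank - S.r X) * S.restCharEval X t * S.contrCharEval X s := by
  intro t s
  simpa only [charEval, restCharEval, contrCharEval, aeval_charPoly, aeval_restCharPoly,
    aeval_contrCharPoly] using charPoly_convolution_general S t s
end
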